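/- Let N₁, N₂, m, r be positive integers and let γ ≥ 1 be a real number. Set s := 100·γ⁴·r and t := 800·γ¹²·s, and assume t + s + r ≤ min{N₁, N₂}. Suppose the linear map 𝓐 : ℝ^{N₁×N₂} → ℝ^m satisfies the modified rank-restricted isometry property of order t + s + r with constants 0 < α ≤ β such that β/α ≤ γ. Let X ∈ ℝ^{N₁×N₂}, e ∈ ℝ^m, and y := 𝓐(X) + e. Let (Xₙ)_{n≥0} be any sequence of matrices such that X₀ = 0 and, for every n ≥ 0, there is a matrix Wₙ which is a best rank-t approximation of 𝓐*(sgn(y − 𝓐(Xₙ))) such that X_{n+1} is a best rank-s approximation of Xₙ + μₙ·Wₙ, where μₙ := ‖y − 𝓐(Xₙ)‖₁ / max{‖Wₙ‖_F², (1/(4γ²))·‖𝓐(Wₙ)‖₁²/‖Wₙ‖_F²} if Wₙ ≠ 0 and μₙ := 0 otherwise. Then, for every best rank-r approximation X_r of X and every n ≥ 0, one has ‖X_r − Xₙ‖_F ≤ ρⁿ·‖X_r‖_F + d·‖𝓐(X − X_r) + e‖₁, where ρ := 1 − (3 − 2√2)/(10·γ²), ρ' := 1 + √(8r/(s+r)),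 and d := 960·ρ'·γ¹⁰ / ((3 − 2√2)·β). Consequently, every cluster point X♯ of the sequence (Xₙ) satisfies ‖X_r − X♯‖_F ≤ d·‖𝓐(X − X_r) + e‖₁. -/

import Mathlib

noncomputable def frobNorm {N₁ N₂ : ℕ} (Z : Matrix (Fin N₁) (Fin N₂) ℝ) : ℝ :=
  Real.sqrt (∑ i, ∑ j, (Z i j) ^ 2)

def frobInner {N₁ N₂ : ℕ} (A B : Matrix (Fin N₁) (Fin N₂) ℝ) : ℝ :=
  ∑ i, ∑ j, A i j * B i j

def l1norm {m : ℕ} (v : Fin m → ℝ) : ℝ := ∑ i, |v i|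

noncomputable def sgnVec {m : ℕ} (v : Fin m → ℝ) : Fin m → ℝ := fun i => Real.sign (v i)

def IsBestRankApprox {N₁ N₂ : ℕ} (k : ℕ) (Z H : Matrix (Fin N₁) (Fin N₂) ℝ) : Prop :=
  H.rank ≤ k ∧
    ∀ W : Matrix (Fin N₁) (Fin N₂) ℝ, W.rank ≤ k → frobNorm (Z - H) ≤ frobNorm (Z - W)
open scoped Classical


open Module

section abstract_part
set_option linter.unusedSectionVars false
variable {E : Type*} [NormedAddCommGroup E] [InnerProductSpace ℝ E] [FiniteDimensional ℝ E]
  {ι : Type*} [Fintype ι]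

theorem aux_extend (S : Submodule ℝ E) (k : ℕ) (h : finrank ℝ S ≤ k) (hk : k ≤ finrank ℝ E) :
    ∃ S' : Submodule ℝ E, S ≤ S' ∧ finrank ℝ S' = k := by
  obtain ⟨d, rfl⟩ := Nat.exists_eq_add_of_le h
  clear h
  induction d with
  | zero => exact ⟨S, le_rfl, rfl⟩
  | succ d ih =>
    obtain ⟨S', h1, h2⟩ := ih (by omega)
    have hne : S' ≠ ⊤ := by
      rintro rfl
      rw [finrank_top] at h2; omega
    obtain ⟨v, hv⟩ : ∃ v, v ∉ S' := by
      by_contra! hc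
      exact hne (Submodule.eq_top_iff'.2 hc)
    refine ⟨S' ⊔ Submodule.span ℝ {v}, h1.trans le_sup_left, ?_⟩
    have hlt : finrank ℝ S' < finrank ℝ (S' ⊔ Submodule.span ℝ {v} : Submodule ℝ E) := by
      apply Submodule.finrank_lt_finrank_of_lt
      refine lt_of_le_of_ne le_sup_left ?_
      intro heq
      apply hv
      rw [heq]
      exact Submodule.mem_sup_right (Submodule.mem_span_singleton_self v)
    have hle := Submodule.finrank_add_le_finrank_add_finrank S' (Submodule.span ℝ {v})
    have : finrank ℝ (Submodule.span ℝ {v}) ≤ 1 := by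
      simpa using finrank_span_le_card (R := ℝ) ({v} : Set E)
    omega

theorem aux_proj (S : Submodule ℝ E) (k : ℕ) (h : finrank ℝ S ≤ k) (hk : k ≤ finrank ℝ E)
    (Z H : ι → E) (hH : ∀ j, H j ∈ S)
    (hbest : ∀ (S' : Submodule ℝ E) (W : ι → E), finrank ℝ S' ≤ k → (∀ j, W j ∈ S') →
      ∑ j, ‖Z j - H j‖ ^ 2 ≤ ∑ j, ‖Z j - W j‖ ^ 2) :
    ∃ S' : Submodule ℝ E, finrank ℝ S' = k ∧ (∀ j, H j ∈ S') ∧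
      ∀ j, ∀ v ∈ S', inner ℝ v (Z j - H j) = 0 := by
  obtain ⟨S', h1, h2⟩ := aux_extend S k h hk
  refine ⟨S', h2, fun j => h1 (hH j), ?_⟩
  have hb := hbest S' (fun j => S'.starProjection (Z j)) h2.le
    (fun j => Submodule.starProjection_apply_mem _ _)
  have key : ∀ j, ‖Z j - H j‖ ^ 2 = ‖Z j - S'.starProjection (Z j)‖ ^ 2
      + ‖S'.starProjection (Z j) - H j‖ ^ 2 := by
    intro j
    have : Z j - H j = (Z j - S'.starProjection (Z j)) + (S'.starProjection (Z j) - H j) := by abel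
    rw [this, sq, sq, sq]
    apply norm_add_sq_eq_norm_sq_add_norm_sq_real
    exact Submodule.starProjection_inner_eq_zero _ _
      (S'.sub_mem (Submodule.starProjection_apply_mem _ _) (h1 (hH j)))
  simp only [key, Finset.sum_add_distrib] at hb
  have h0 : ∑ j, ‖S'.starProjection (Z j) - H j‖ ^ 2 = 0 :=
    le_antisymm (by linarith) (Finset.sum_nonneg fun _ _ => sq_nonneg _)
  rw [Finset.sum_eq_zero_iff_of_nonneg (fun _ _ => sq_nonneg _)] at h0
  intro j v hv
  have hj := h0 j (Finset.mem_univ j)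
  have : S'.starProjection (Z j) = H j := by
    rw [← sub_eq_zero]; simpa using hj
  rw [← this, real_inner_comm]
  exact Submodule.starProjection_inner_eq_zero _ _ hv

theorem aux_swap (S : Submodule ℝ E) (k : ℕ) (h : finrank ℝ S = k)
    (Z H : ι → E) (hH : ∀ j, H j ∈ S)
    (hT : ∀ j, ∀ v ∈ S, inner ℝ v (Z j - H j) = 0)
    (hbest : ∀ (S' : Submodule ℝ E) (W : ι → E), finrank ℝ S' ≤ k → (∀ j, W j ∈ S') →
      ∑ j, ‖Z j - H j‖ ^ 2 ≤ ∑ j, ‖Z j - W j‖ ^ 2)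
    (q u : E) (hq : q ∈ S) (hq1 : ‖q‖ = 1) (hu1 : ‖u‖ = 1) (hu : ∀ v ∈ S, inner ℝ v u = 0) :
    ∑ j, (inner ℝ u (Z j)) ^ 2 ≤ ∑ j, (inner ℝ q (Z j)) ^ 2 := by
  have hqq : inner ℝ q q = 1 := by rw [real_inner_self_eq_norm_sq, hq1]; norm_num
  have huu : inner ℝ u u = 1 := by rw [real_inner_self_eq_norm_sq, hu1]; norm_num
  have hqZ : ∀ j, inner ℝ q (H j) = inner ℝ q (Z j) := by
    intro j
    have := hT j q hq
    rw [inner_sub_right] at this; linarith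
  have hb := hbest ((S ⊓ (Submodule.span ℝ {q})ᗮ) ⊔ Submodule.span ℝ {u})
    (fun j => (H j - inner ℝ q (Z j) • q) + inner ℝ u (Z j) • u) ?_ ?_
  · have key : ∀ j, ‖Z j - ((H j - inner ℝ q (Z j) • q) + inner ℝ u (Z j) • u)‖ ^ 2
        = ‖Z j - H j‖ ^ 2 + (inner ℝ q (Z j)) ^ 2 - (inner ℝ u (Z j)) ^ 2 := by
      intro j
      have e : Z j - ((H j - inner ℝ q (Z j) • q) + inner ℝ u (Z j) • u)
        = (Z j - H j) + (inner ℝ q (Z j) • q - inner ℝ u (Z j) • u) := by abel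
      have h1 := hT j q hq
      have h2 : inner ℝ u (Z j - H j) = inner ℝ u (Z j) := by
        rw [inner_sub_right, real_inner_comm (H j) u, hu _ (hH j), sub_zero]
      have h3 := hu q hq
      rw [e, norm_add_sq_real, norm_sub_sq_real (inner ℝ q (Z j) • q), inner_sub_right,
        inner_smul_right,
        inner_smul_right, inner_smul_left, inner_smul_right, h3, norm_smul, norm_smul, hq1, hu1,
        real_inner_comm q, h1, real_inner_comm u, h2]
      simp only [mul_one, Real.norm_eq_abs, sq_abs, mul_zero]
      ring
    simp only [key, Finset.sum_add_distrib, Finset.sum_sub_distrib] at hb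
    linarith
  · have hlt : finrank ℝ (S ⊓ (Submodule.span ℝ {q})ᗮ : Submodule ℝ E) < finrank ℝ S := by
      apply Submodule.finrank_lt_finrank_of_lt
      refine lt_of_le_of_ne inf_le_left ?_
      intro heq
      have : q ∈ (S ⊓ (Submodule.span ℝ {q})ᗮ : Submodule ℝ E) := by rw [heq]; exact hq
      have := Submodule.mem_orthogonal_singleton_iff_inner_right.1 this.2
      rw [hqq] at this; norm_num at this
    have hle := Submodule.finrank_add_le_finrank_add_finrank (S ⊓ (Submodule.span ℝ {q})ᗮ)
      (Submodule.span ℝ {u})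
    have : finrank ℝ (Submodule.span ℝ {u}) ≤ 1 := by
      simpa using finrank_span_le_card (R := ℝ) ({u} : Set E)
    omega
  · intro j
    refine Submodule.add_mem_sup ⟨S.sub_mem (hH j) (S.smul_mem _ hq), ?_⟩
      (Submodule.smul_mem _ _ (Submodule.mem_span_singleton_self u))
    refine Submodule.mem_orthogonal_singleton_iff_inner_right.2 ?_
    rw [inner_sub_right, inner_smul_right, hqq, hqZ]; ring

theorem aux_tail (S : Submodule ℝ E) (k : ℕ) (h : finrank ℝ S = k)
    (Z H : ι → E) (hH : ∀ j, H j ∈ S)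
    (hT : ∀ j, ∀ v ∈ S, inner ℝ v (Z j - H j) = 0)
    (hbest : ∀ (S' : Submodule ℝ E) (W : ι → E), finrank ℝ S' ≤ k → (∀ j, W j ∈ S') →
      ∑ j, ‖Z j - H j‖ ^ 2 ≤ ∑ j, ‖Z j - W j‖ ^ 2)
    (R : Submodule ℝ E) (hR : R ≤ S) (p : ℕ) (hp : p ≤ finrank ℝ R)
    (Y : ι → E) (hY : ∀ j, ∀ v ∈ R, inner ℝ v (Y j) = inner ℝ v (Z j)) (u : E) :
    p * ∑ j, (inner ℝ u (Z j - H j)) ^ 2 ≤ ‖u‖ ^ 2 * ∑ j, ‖Y j‖ ^ 2 := by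
  set u' := u - S.starProjection u with hu'
  have hu'S : ∀ v ∈ S, inner ℝ v u' = 0 := by
    intro v hv
    rw [real_inner_comm]; exact Submodule.starProjection_inner_eq_zero _ _ hv
  have hnorm : ‖u'‖ ^ 2 ≤ ‖u‖ ^ 2 := by
    have e : u = u' + S.starProjection u := by rw [hu']; abel
    have := norm_add_sq_real u' (S.starProjection u)
    rw [← e, real_inner_comm, hu'S _ (Submodule.starProjection_apply_mem _ _)] at this
    nlinarith [sq_nonneg ‖S.starProjection u‖]
  have e1 : ∀ j, inner ℝ u (Z j - H j) = inner ℝ u' (Z j) := by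
    intro j
    rw [hu', inner_sub_left]
    have a := hT j _ (Submodule.starProjection_apply_mem S u)
    have b := hu'S _ (hH j)
    rw [real_inner_comm, hu', inner_sub_left] at b
    rw [inner_sub_right] at a ⊢
    linarith
  simp only [e1]
  have hYn : 0 ≤ ∑ j, ‖Y j‖ ^ 2 := Finset.sum_nonneg fun _ _ => sq_nonneg _
  by_cases hz : u' = 0
  · simp only [hz, inner_zero_left]
    simpa using mul_nonneg (sq_nonneg ‖u‖) hYn
  have hpos : 0 < ‖u'‖ := norm_pos_iff.2 hz
  let b := stdOrthonormalBasis ℝ R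
  have hsw : ∀ i, ∑ j, (inner ℝ u' (Z j)) ^ 2 ≤ ‖u'‖ ^ 2 * ∑ j, (inner ℝ (b i : E) (Y j)) ^ 2 := by
    intro i
    have hb1 : ‖(b i : E)‖ = 1 := b.orthonormal.1 i
    have := aux_swap S k h Z H hH hT hbest (b i : E) (‖u'‖⁻¹ • u') (hR (b i).2) hb1
      (by rw [norm_smul, norm_inv, norm_norm, inv_mul_cancel₀ hpos.ne'])
      (fun v hv => by rw [inner_smul_right, hu'S v hv, mul_zero])
    simp only [inner_smul_left, mul_pow, ← Finset.mul_sum] at this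
    simp only [hY _ _ (b i).2]
    simp only [conj_trivial, inv_pow] at this
    rwa [inv_mul_le_iff₀ (by positivity)] at this
  have hsum := Finset.sum_le_sum (s := Finset.univ) (fun i _ => hsw i)
  rw [Finset.sum_const, ← Finset.mul_sum, Finset.sum_comm] at hsum
  simp only [Finset.card_univ, Fintype.card_fin, nsmul_eq_mul] at hsum
  have hort : Orthonormal ℝ (fun i => (b i : E)) :=
    b.orthonormal.comp_linearIsometry R.subtypeₗᵢ
  have hbes : ∀ j, ∑ i, (inner ℝ (b i : E) (Y j)) ^ 2 ≤ ‖Y j‖ ^ 2 := by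
    intro j
    have := hort.sum_inner_products_le (Y j) (s := Finset.univ)
    simpa using this
  have h1 : ∑ j, ∑ i, (inner ℝ (b i : E) (Y j)) ^ 2 ≤ ∑ j, ‖Y j‖ ^ 2 :=
    Finset.sum_le_sum fun j _ => hbes j
  have h0 : 0 ≤ ∑ j, (inner ℝ u' (Z j)) ^ 2 := Finset.sum_nonneg fun _ _ => sq_nonneg _
  have hp' : (p : ℝ) ≤ finrank ℝ R := by exact_mod_cast hp
  calc (p : ℝ) * ∑ j, (inner ℝ u' (Z j)) ^ 2 ≤ finrank ℝ R * ∑ j, (inner ℝ u' (Z j)) ^ 2 := by gcongr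
    _ ≤ _ := hsum
    _ ≤ ‖u'‖ ^ 2 * ∑ j, ‖Y j‖ ^ 2 := by gcongr
    _ ≤ _ := by gcongr

theorem aux_dual (R : Submodule ℝ E) (r : ℕ) (hr : finrank ℝ R ≤ r) (B T : ι → E)
    (hB : ∀ j, B j ∈ R) (c : ℝ) (p : ℝ) (hp : 0 ≤ p) (hc : 0 ≤ c)
    (hT : ∀ u : E, p * ∑ j, (inner ℝ u (T j)) ^ 2 ≤ ‖u‖ ^ 2 * c) :
    p * (∑ j, inner ℝ (B j) (T j)) ^ 2 ≤ r * c * ∑ j, ‖B j‖ ^ 2 := by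
  let b := stdOrthonormalBasis ℝ R
  have hB' : ∀ j, B j = ∑ i, inner ℝ (b i : E) (B j) • (b i : E) := by
    intro j
    have := b.sum_repr' ⟨B j, hB j⟩
    have := congrArg (R.subtype) this
    simpa using this.symm
  have h1 : ∀ j, inner ℝ (B j) (T j) = ∑ i, inner ℝ (b i : E) (B j) * inner ℝ (b i : E) (T j) := by
    intro j
    conv_lhs => rw [hB' j]
    rw [sum_inner]
    simp [inner_smul_left]
  have hn : ∀ j, ∑ i, (inner ℝ (b i : E) (B j)) ^ 2 = ‖B j‖ ^ 2 := by
    intro j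
    have := b.sum_sq_norm_inner_right ⟨B j, hB j⟩
    simpa using this
  have cs := Finset.sum_mul_sq_le_sq_mul_sq (Finset.univ : Finset (ι × Fin (finrank ℝ R)))
    (fun x => inner ℝ (b x.2 : E) (B x.1)) (fun x => inner ℝ (b x.2 : E) (T x.1))
  simp only [Fintype.sum_prod_type] at cs
  simp only [← h1, hn] at cs
  rw [Finset.sum_comm (f := fun j i => inner ℝ (b i : E) (T j) ^ 2)] at cs
  have h2 : p * ∑ i, ∑ j, inner ℝ (b i : E) (T j) ^ 2 ≤ r * c := by
    rw [Finset.mul_sum]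
    calc _ ≤ ∑ i : Fin (finrank ℝ R), c := by
          apply Finset.sum_le_sum
          intro i _
          have hb1 : ‖(b i : E)‖ = 1 := b.orthonormal.1 i
          have := hT (b i)
          rwa [hb1, one_pow, one_mul] at this
      _ = finrank ℝ R * c := by simp
      _ ≤ r * c := by
        have : (finrank ℝ R : ℝ) ≤ r := by exact_mod_cast hr
        gcongr
  have h3 : 0 ≤ ∑ j, ‖B j‖ ^ 2 := Finset.sum_nonneg fun _ _ => sq_nonneg _
  nlinarith [mul_le_mul_of_nonneg_left cs hp, mul_le_mul_of_nonneg_left h2 h3]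

end abstract_part

section matrix_part
variable {N₁ N₂ : ℕ}

noncomputable def colv (M : Matrix (Fin N₁) (Fin N₂) ℝ) (j : Fin N₂) : EuclideanSpace ℝ (Fin N₁) :=
  WithLp.toLp 2 (fun i => M i j)

theorem colv_add (A B : Matrix (Fin N₁) (Fin N₂) ℝ) (j) : colv (A + B) j = colv A j + colv B j := rfl
theorem colv_sub (A B : Matrix (Fin N₁) (Fin N₂) ℝ) (j) : colv (A - B) j = colv A j - colv B j := rfl

theorem frobNorm_nonneg (A : Matrix (Fin N₁) (Fin N₂) ℝ) : 0 ≤ frobNorm A := Real.sqrt_nonneg _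

theorem frobNorm_sq (A : Matrix (Fin N₁) (Fin N₂) ℝ) : frobNorm A ^ 2 = ∑ j, ‖colv A j‖ ^ 2 := by
  have h : 0 ≤ ∑ i, ∑ j, (A i j) ^ 2 :=
    Finset.sum_nonneg fun _ _ => Finset.sum_nonneg fun _ _ => sq_nonneg _
  unfold frobNorm
  rw [Real.sq_sqrt h, Finset.sum_comm]
  simp [colv, EuclideanSpace.norm_sq_eq]

theorem frobInner_eq (A B : Matrix (Fin N₁) (Fin N₂) ℝ) :
    frobInner A B = ∑ j, inner ℝ (colv A j) (colv B j) := by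
  rw [frobInner, Finset.sum_comm]
  simp [colv, PiLp.inner_apply, mul_comm]

theorem rank_le_iff (A : Matrix (Fin N₁) (Fin N₂) ℝ) (k : ℕ) :
    A.rank ≤ k ↔ ∃ S : Submodule ℝ (EuclideanSpace ℝ (Fin N₁)), finrank ℝ S ≤ k ∧ ∀ j, colv A j ∈ S := by
  rw [Matrix.rank_eq_finrank_span_cols]
  let L : EuclideanSpace ℝ (Fin N₁) ≃ₗ[ℝ] (Fin N₁ → ℝ) := WithLp.linearEquiv 2 ℝ (Fin N₁ → ℝ)
  constructor
  · intro h
    refine ⟨(Submodule.span ℝ (Set.range A.col)).map L.symm.toLinearMap, ?_, ?_⟩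
    · rw [LinearEquiv.finrank_map_eq]; exact h
    · intro j
      exact ⟨A.col j, Submodule.subset_span ⟨j, rfl⟩, rfl⟩
  · rintro ⟨S, hS, h⟩
    have hle : Submodule.span ℝ (Set.range A.col) ≤ S.map L.toLinearMap := by
      rw [Submodule.span_le]
      rintro _ ⟨j, rfl⟩
      exact ⟨colv A j, h j, rfl⟩
    have h1 := Submodule.finrank_mono hle
    have h2 : finrank ℝ (S.map L.toLinearMap) = finrank ℝ S := LinearEquiv.finrank_map_eq L S
    omega

theorem frobInner_self (A : Matrix (Fin N₁) (Fin N₂) ℝ) : frobInner A A = frobNorm A ^ 2 := by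
  rw [frobInner_eq, frobNorm_sq]; simp

theorem frobInner_comm (A B : Matrix (Fin N₁) (Fin N₂) ℝ) : frobInner A B = frobInner B A := by
  simp [frobInner, mul_comm]

theorem frobNorm_add_sq (A B : Matrix (Fin N₁) (Fin N₂) ℝ) :
    frobNorm (A + B) ^ 2 = frobNorm A ^ 2 + 2 * frobInner A B + frobNorm B ^ 2 := by
  simp only [frobNorm_sq, frobInner_eq, colv_add, norm_add_sq_real, Finset.sum_add_distrib,
    Finset.mul_sum]

theorem frobInner_sub_right (A B C : Matrix (Fin N₁) (Fin N₂) ℝ) :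
    frobInner A (B - C) = frobInner A B - frobInner A C := by
  simp only [frobInner_eq, colv_sub, inner_sub_right, Finset.sum_sub_distrib]

theorem frobInner_smul_right (A B : Matrix (Fin N₁) (Fin N₂) ℝ) (c : ℝ) :
    frobInner A (c • B) = c * frobInner A B := by
  simp only [frobInner, Matrix.smul_apply, smul_eq_mul, Finset.mul_sum]
  exact Finset.sum_congr rfl fun _ _ => Finset.sum_congr rfl fun _ _ => by ring

theorem frobNorm_smul_sq (B : Matrix (Fin N₁) (Fin N₂) ℝ) (c : ℝ) :
    frobNorm (c • B) ^ 2 = c ^ 2 * frobNorm B ^ 2 := by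
  rw [← frobInner_self, frobInner_smul_right, frobInner_comm, frobInner_smul_right,
    frobInner_self]; ring

theorem frobNorm_sub_comm (A B : Matrix (Fin N₁) (Fin N₂) ℝ) :
    frobNorm (A - B) = frobNorm (B - A) := by
  simp only [frobNorm, Matrix.sub_apply, sub_sq_comm]

theorem frobInner_sq_le (A B : Matrix (Fin N₁) (Fin N₂) ℝ) :
    (frobInner A B) ^ 2 ≤ frobNorm A ^ 2 * frobNorm B ^ 2 := by
  have cs := Finset.sum_mul_sq_le_sq_mul_sq (Finset.univ : Finset (Fin N₁ × Fin N₂))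
    (fun x => A x.1 x.2) (fun x => B x.1 x.2)
  simp only [Fintype.sum_prod_type] at cs
  rw [← frobInner_self, ← frobInner_self]
  simp only [frobInner, ← sq]
  exact cs

theorem best_family {k : ℕ} (hk : k ≤ N₁) {Z H : Matrix (Fin N₁) (Fin N₂) ℝ}
    (h : IsBestRankApprox k Z H) :
    (∃ S' : Submodule ℝ (EuclideanSpace ℝ (Fin N₁)), finrank ℝ S' = k ∧ (∀ j, colv H j ∈ S') ∧
      ∀ j, ∀ v ∈ S', inner ℝ v (colv Z j - colv H j) = 0) ∧
    (∀ (S' : Submodule ℝ (EuclideanSpace ℝ (Fin N₁))) (W : Fin N₂ → EuclideanSpace ℝ (Fin N₁)),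
      finrank ℝ S' ≤ k → (∀ j, W j ∈ S') →
      ∑ j, ‖colv Z j - colv H j‖ ^ 2 ≤ ∑ j, ‖colv Z j - W j‖ ^ 2) := by
  have hb : (∀ (S' : Submodule ℝ (EuclideanSpace ℝ (Fin N₁)))
      (W : Fin N₂ → EuclideanSpace ℝ (Fin N₁)),
      finrank ℝ S' ≤ k → (∀ j, W j ∈ S') →
      ∑ j, ‖colv Z j - colv H j‖ ^ 2 ≤ ∑ j, ‖colv Z j - W j‖ ^ 2) := by
    intro S' W hS hW
    let WM : Matrix (Fin N₁) (Fin N₂) ℝ := fun i j => W j i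
    have hc : ∀ j, colv WM j = W j := fun j => rfl
    have := h.2 WM ((rank_le_iff _ _).2 ⟨S', hS, fun j => by rw [hc]; exact hW j⟩)
    have h2 := pow_le_pow_left₀ (frobNorm_nonneg _) this 2
    simpa only [frobNorm_sq, colv_sub, hc] using h2
  refine ⟨?_, hb⟩
  obtain ⟨S, hS, hSH⟩ := (rank_le_iff _ _).1 h.1
  exact aux_proj S k hS (by simpa using hk) _ _ hSH hb

theorem best_inner_zero {k : ℕ} (hk : k ≤ N₁) {Z H : Matrix (Fin N₁) (Fin N₂) ℝ}
    (h : IsBestRankApprox k Z H) : frobInner H (Z - H) = 0 := by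
  obtain ⟨⟨S, h1, h2, h3⟩, -⟩ := best_family hk h
  rw [frobInner_eq]
  exact Finset.sum_eq_zero fun j _ => h3 j _ (h2 j)

theorem best_dual {k l : ℕ} (hk : k ≤ N₁) {Z H B : Matrix (Fin N₁) (Fin N₂) ℝ}
    (h : IsBestRankApprox k Z H) (hB : B.rank ≤ l) :
    k * frobInner B (Z - H) ^ 2 ≤ l * frobNorm H ^ 2 * frobNorm B ^ 2 := by
  obtain ⟨⟨S, h1, h2, h3⟩, hb⟩ := best_family hk h
  obtain ⟨R, hR, hRB⟩ := (rank_le_iff _ _).1 hB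
  rw [frobInner_eq, frobNorm_sq B]
  refine aux_dual R l hR _ _ hRB _ k (Nat.cast_nonneg _) (sq_nonneg _) ?_
  intro u
  rw [frobNorm_sq]
  refine aux_tail S k h1 _ _ h2 h3 hb S le_rfl k h1.ge (colv H) ?_ u
  intro j v hv
  have := h3 j v hv
  rw [inner_sub_right] at this; linarith

theorem best_threshold {s r : ℕ} (hs : s ≤ N₁) (hrs : r ≤ s) {Z H X : Matrix (Fin N₁) (Fin N₂) ℝ}
    (h : IsBestRankApprox s Z H) (hX : X.rank ≤ r) :
    ∃ p : ℝ, frobNorm (X - H) ^ 2 ≤ frobNorm (X - Z) ^ 2 + 2 * p ∧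
      ((s : ℝ) - r) * p ^ 2 ≤ r * frobNorm (X - Z) ^ 2 * frobNorm (X - H) ^ 2 := by
  obtain ⟨⟨S, h1, h2, h3⟩, hb⟩ := best_family hs h
  obtain ⟨R, hR, hRX⟩ := (rank_le_iff _ _).1 hX
  refine ⟨frobInner X (Z - H), ?_, ?_⟩
  · have e : X - Z = (X - H) + (-1 : ℝ) • (Z - H) := by ext i j; simp
    have h0 := best_inner_zero hs h
    rw [e, frobNorm_add_sq, frobInner_smul_right, frobInner_comm (X - H), frobInner_sub_right,
      frobInner_comm _ H, h0, frobInner_comm _ X]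
    nlinarith [sq_nonneg (frobNorm ((-1 : ℝ) • (Z - H)))]
  · set P : EuclideanSpace ℝ (Fin N₁) →L[ℝ] EuclideanSpace ℝ (Fin N₁) := S.starProjection with hP
    let Q : EuclideanSpace ℝ (Fin N₁) →ₗ[ℝ] EuclideanSpace ℝ (Fin N₁) :=
      LinearMap.id - (P : EuclideanSpace ℝ (Fin N₁) →ₗ[ℝ] EuclideanSpace ℝ (Fin N₁))
    have hQ : ∀ v, Q v = v - P v := fun v => rfl
    have hdim : s - r ≤ finrank ℝ (S ⊓ Rᗮ : Submodule ℝ (EuclideanSpace ℝ (Fin N₁))) := by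
      have a := Submodule.finrank_sup_add_finrank_inf_eq S Rᗮ
      have b := Submodule.finrank_add_finrank_orthogonal R
      have c := Submodule.finrank_le (S ⊔ Rᗮ)
      omega
    have tail := fun u => aux_tail S s h1 (colv Z) (colv H) h2 h3 hb _ inf_le_left (s - r) hdim
      (colv (Z - X)) (fun j v hv => ?_) u
    swap
    · rw [colv_sub, inner_sub_right, real_inner_comm (colv X j) v,
        Submodule.inner_right_of_mem_orthogonal (hRX j) hv.2, sub_zero]
    have dual := aux_dual (R.map Q) r ((Submodule.finrank_map_le _ _).trans hR)
      (fun j => Q (colv X j)) (colv (Z - H)) (fun j => ⟨_, hRX j, rfl⟩)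
      (∑ j, ‖colv (Z - X) j‖ ^ 2) ((s - r : ℕ) : ℝ) (Nat.cast_nonneg _)
      (Finset.sum_nonneg fun _ _ => sq_nonneg _) tail
    have e1 : ∀ j, inner ℝ (Q (colv X j)) (colv (Z - H) j) = inner ℝ (colv X j) (colv (Z - H) j) := by
      intro j
      rw [hQ, inner_sub_left, colv_sub, h3 j _ (Submodule.starProjection_apply_mem _ _), sub_zero]
    have e2 : ∀ j, ‖Q (colv X j)‖ ^ 2 ≤ ‖colv (X - H) j‖ ^ 2 := by
      intro j
      have e : colv (X - H) j = Q (colv X j) + (P (colv X j) - colv H j) := by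
        rw [hQ, colv_sub]; abel
      have o : inner ℝ (Q (colv X j)) (P (colv X j) - colv H j) = 0 :=
        Submodule.starProjection_inner_eq_zero _ _
          (S.sub_mem (Submodule.starProjection_apply_mem _ _) (h2 j))
      rw [e, norm_add_sq_real, o]
      nlinarith [sq_nonneg ‖P (colv X j) - colv H j‖]
    simp only [e1] at dual
    rw [← frobInner_eq, ← frobNorm_sq, frobNorm_sub_comm, Nat.cast_sub hrs] at dual
    refine dual.trans ?_
    rw [frobNorm_sq (X - H)]
    have := Finset.sum_le_sum (s := Finset.univ) (fun j _ => e2 j)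
    gcongr
    
end matrix_part

theorem le_of_sq_le_sq_aux {a b : ℝ} (h : a ^ 2 ≤ b ^ 2) (hb : 0 ≤ b) : a ≤ b :=
  (abs_le_of_sq_le_sq' h hb).2

theorem l1_add_le {m : ℕ} (u v : Fin m → ℝ) : l1norm (u + v) ≤ l1norm u + l1norm v := by
  unfold l1norm
  rw [← Finset.sum_add_distrib]
  exact Finset.sum_le_sum fun i _ => abs_add_le _ _

theorem l1_nonneg {m : ℕ} (u : Fin m → ℝ) : 0 ≤ l1norm u :=
  Finset.sum_nonneg fun _ _ => abs_nonneg _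

theorem l1_neg {m : ℕ} (u : Fin m → ℝ) : l1norm (-u) = l1norm u := by
  simp [l1norm]

theorem sgn_self {m : ℕ} (v : Fin m → ℝ) : ∑ i, sgnVec v i * v i = l1norm v := by
  unfold l1norm sgnVec
  refine Finset.sum_congr rfl fun i _ => ?_
  rcases lt_trichotomy (v i) 0 with h | h | h
  · rw [Real.sign_of_neg h, abs_of_neg h]; ring
  · simp [h]
  · rw [Real.sign_of_pos h, abs_of_pos h]; ring

theorem sgn_le {m : ℕ} (v z : Fin m → ℝ) : ∑ i, sgnVec v i * z i ≤ l1norm z := by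
  unfold l1norm sgnVec
  refine Finset.sum_le_sum fun i _ => ?_
  rcases Real.sign_apply_eq (v i) with h | h | h <;> rw [h]
  · linarith [neg_abs_le (z i)]
  · simp
  · linarith [le_abs_self (z i)]

theorem frobNorm_pos {N₁ N₂ : ℕ} {W : Matrix (Fin N₁) (Fin N₂) ℝ} (h : W ≠ 0) :
    0 < frobNorm W := by
  refine lt_of_le_of_ne (frobNorm_nonneg W) fun h0 => h ?_
  have h1 := frobNorm_sq W
  rw [← h0] at h1
  have h2 : ∑ j, ‖colv W j‖ ^ 2 = 0 := by rw [← h1]; norm_num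
  rw [Finset.sum_eq_zero_iff_of_nonneg (fun _ _ => sq_nonneg _)] at h2
  ext i j
  have h3 : colv W j = 0 := by simpa using h2 j (Finset.mem_univ j)
  exact congrArg (fun v : EuclideanSpace ℝ (Fin N₁) => v i) h3

/-- scalar form of the thresholding estimate -/
theorem scalar_threshold (x z p g : ℝ) (hx : 0 ≤ x) (hz : 0 ≤ z) (hg : 0 < g) (hg1 : g ≤ 1)
    (h1 : x ^ 2 ≤ z ^ 2 + 2 * p) (h2 : 99 * p ^ 2 ≤ g ^ 2 * z ^ 2 * x ^ 2) :
    x ≤ (1 + 0.11 * g) * z := by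
  have hp : p ≤ g / 9.9 * (z * x) := by
    refine le_of_sq_le_sq_aux ?_ (by positivity)
    have : (g / 9.9 * (z * x)) ^ 2 = (g ^ 2 * z ^ 2 * x ^ 2) / 98.01 := by ring
    rw [this, le_div_iff₀ (by norm_num)]
    nlinarith [sq_nonneg p]
  by_contra! hc
  have hx0 : 0 < x := lt_of_le_of_lt (by positivity) hc
  obtain ⟨y, hy, rfl⟩ : ∃ y, 0 < y ∧ x = (1 + 0.11 * g) * z + y := ⟨x - (1 + 0.11 * g) * z, by linarith, by ring⟩
  have hgz : 0 ≤ g * z ^ 2 := by positivity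
  have hgz2 : g * (g * z ^ 2) ≤ g * z ^ 2 := by nlinarith
  have hzy : 0 ≤ z * y := by positivity
  have hgzy : g * (z * y) ≤ z * y := by nlinarith
  have hgzy' : 0 ≤ g * (z * y) := by positivity
  have hy2 : 0 < y ^ 2 := by positivity
  norm_num at *
  nlinarith

theorem scalar_caseA (a E R M z α β γ g : ℝ) (ha : 0 ≤ a) (hα : 0 < α) (hβ : 0 < β) (hγ : 1 ≤ γ)
    (hβα : β ≤ γ * α) (hg : g * γ ^ 2 = 1) (hM : 0 < M) (hMβ : M ≤ β ^ 2) (hz : 0 ≤ z)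
    (hE : E ≤ α * a / 20) (hR : α * a - E ≤ R)
    (hz2 : z ^ 2 ≤ a ^ 2 - R / M * (R - 2 * E - α * a / 14)) : z ≤ (1 - 0.365 * g) * a := by
  have hγ2 : 1 ≤ γ ^ 2 := by nlinarith
  have hg0 : 0 < g := by
    by_contra! h
    nlinarith
  have hg1 : g ≤ 1 := by nlinarith
  have hαa : 0 ≤ α * a := by positivity
  have hR1 : 0.95 * (α * a) ≤ R := by norm_num; linarith
  have hR2 : 0.7785 * (α * a) ≤ R - 2 * E - α * a / 14 := by norm_num; linarith
  have hβ2 : β ^ 2 ≤ γ ^ 2 * α ^ 2 := by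
    rw [← mul_pow]; exact pow_le_pow_left₀ hβ.le hβα 2
  have hprod : 0.73 * (α ^ 2 * a ^ 2) ≤ R * (R - 2 * E - α * a / 14) := by
    have := mul_le_mul hR1 hR2 (by positivity) (le_trans (by positivity) hR1)
    norm_num at *
    nlinarith [sq_nonneg (α * a)]
  have hk : 0.73 * g * a ^ 2 ≤ R / M * (R - 2 * E - α * a / 14) := by
    rw [div_mul_eq_mul_div, le_div_iff₀ hM]
    refine le_trans ?_ hprod
    have : g * M ≤ α ^ 2 := by
      calc g * M ≤ g * (γ ^ 2 * α ^ 2) := by gcongr; linarith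
        _ = (g * γ ^ 2) * α ^ 2 := by ring
        _ = α ^ 2 := by rw [hg, one_mul]
    have h2 := mul_le_mul_of_nonneg_right this (sq_nonneg a)
    norm_num
    nlinarith
  refine le_of_sq_le_sq_aux ?_ (mul_nonneg (by norm_num; linarith) ha)
  rw [mul_pow]
  norm_num at *
  nlinarith [sq_nonneg (g * a)]

theorem scalar_caseB (a E R M w z α β γ : ℝ) (ha : 0 ≤ a) (hα : 0 < α) (hE0 : 0 ≤ E)
    (hγ : 1 ≤ γ) (hβα : β ≤ γ * α) (hM : 0 < M) (hM1 : w ^ 2 ≤ M)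
    (hM2 : α ^ 2 / (4 * γ ^ 2) ≤ M) (hw : 0 < w)
    (hE : α * a ≤ 20 * E) (hR : R ≤ β * a + E) (hR0 : 0 ≤ R)
    (hz : z ≤ a + R / M * w) : α * z ≤ 62 * γ ^ 2 * E := by
  have hγ0 : 0 < γ := by linarith
  have hMw : w * α / (2 * γ) ≤ M := by
    have : α ^ 2 / (4 * γ ^ 2) = (α / (2 * γ)) ^ 2 := by field_simp; ring
    rw [this] at hM2
    have h2 : w * α / (2 * γ) = w * (α / (2 * γ)) := by ring
    rw [h2]
    nlinarith [sq_nonneg (w - α / (2 * γ))]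
  have h1 : R / M * w ≤ R * (2 * γ / α) := by
    rw [div_mul_eq_mul_div, mul_div_assoc]
    refine mul_le_mul_of_nonneg_left ?_ hR0
    rw [div_le_div_iff₀ hM hα]
    rw [div_le_iff₀ (by positivity)] at hMw
    linarith
  have hR2 : R ≤ 21 * γ * E := by
    have : β * a ≤ γ * (α * a) := by nlinarith
    have h3 : γ * (α * a) ≤ γ * (20 * E) := by gcongr
    nlinarith
  have h2 : α * (R * (2 * γ / α)) = 2 * γ * R := by field_simp
  have h3 : α * z ≤ α * a + 2 * γ * R := by
    rw [← h2, ← mul_add]; gcongr; linarith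
  have h4 : 2 * γ * R ≤ 2 * γ * (21 * γ * E) := by gcongr
  have h5 : E ≤ γ ^ 2 * E := by nlinarith [mul_nonneg hE0 (by nlinarith : (0:ℝ) ≤ γ ^ 2 - 1)]
  nlinarith

set_option maxHeartbeats 1000000 in
theorem zstep {N₁ N₂ m : ℕ} (r s t : ℕ) (hr : 0 < r) (γ : ℝ) (hγ : 1 ≤ γ)
    (hs : (s : ℝ) = 100 * γ ^ 4 * r) (ht : (t : ℝ) = 800 * γ ^ 12 * s)
    (hdim : t + s + r ≤ min N₁ N₂)
    (A : Matrix (Fin N₁) (Fin N₂) ℝ →ₗ[ℝ] (Fin m → ℝ))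
    (Astar : (Fin m → ℝ) →ₗ[ℝ] Matrix (Fin N₁) (Fin N₂) ℝ)
    (hadj : ∀ (u : Fin m → ℝ) (Z : Matrix (Fin N₁) (Fin N₂) ℝ),
      frobInner (Astar u) Z = ∑ i, u i * A Z i)
    (α β : ℝ) (hα : 0 < α) (hαβ : α ≤ β) (hβα : β ≤ γ * α)
    (hRIP : ∀ Z : Matrix (Fin N₁) (Fin N₂) ℝ, Z.rank ≤ t + s + r →
      α * frobNorm Z ≤ l1norm (A Z) ∧ l1norm (A Z) ≤ β * frobNorm Z)
    (f v : Fin m → ℝ) (U W : Matrix (Fin N₁) (Fin N₂) ℝ)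
    (hv : v = A U + f) (hU : U.rank ≤ s + r)
    (hW : IsBestRankApprox t (Astar (sgnVec v)) W) (μ g : ℝ) (hg : g * γ ^ 2 = 1)
    (hμ : μ = if W ≠ 0 then l1norm v /
              max (frobNorm W ^ 2) ((1 / (4 * γ ^ 2)) * l1norm (A W) ^ 2 / frobNorm W ^ 2)
          else 0) :
    frobNorm (U - μ • W) ≤ (1 - 0.365 * g) * frobNorm U ∨
      α * frobNorm (U - μ • W) ≤ 62 * γ ^ 2 * l1norm f := by
  have hβ : 0 < β := lt_of_lt_of_le hα hαβ
  have hγ0 : 0 < γ := by linarith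
  have htN : t ≤ N₁ := by omega
  have hr0 : (0 : ℝ) < r := by exact_mod_cast hr
  have hs0 : (0 : ℝ) < s := by rw [hs]; positivity
  have ha := frobNorm_nonneg U
  have hE := l1_nonneg f
  have hR0 := l1_nonneg v
  obtain ⟨hU1, hU2⟩ := hRIP U (by omega)
  obtain ⟨hW1, hW2⟩ := hRIP W (by have := hW.1; omega)
  have hRl : α * frobNorm U - l1norm f ≤ l1norm v := by
    have := l1_add_le v (-f)
    rw [l1_neg, hv, add_neg_cancel_right] at this
    rw [hv]; linarith
  have hRu : l1norm v ≤ β * frobNorm U + l1norm f := by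
    have := l1_add_le (A U) f
    rw [hv]; linarith
  -- inner products
  have hUV : l1norm v - l1norm f ≤ frobInner U (Astar (sgnVec v)) := by
    rw [frobInner_comm, hadj]
    have e : A U = v - f := by rw [hv]; simp
    have h1 := sgn_self v
    have h2 := sgn_le v f
    rw [e]
    simp only [Pi.sub_apply, mul_sub, Finset.sum_sub_distrib]
    linarith
  have hWsq : frobNorm W ^ 2 ≤ l1norm (A W) := by
    have := best_inner_zero htN hW
    rw [frobInner_sub_right, frobInner_self, frobInner_comm, hadj] at this
    have h2 := sgn_le v (A W)
    linarith
  have hw := frobNorm_nonneg W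
  have hwβ : frobNorm W ≤ β := by
    by_contra! hc
    nlinarith
  have hUVW : frobInner U (Astar (sgnVec v) - W) ≤ α * frobNorm U / 28 := by
    have h1 := best_dual htN hW hU
    refine le_of_sq_le_sq_aux ?_ (by positivity)
    have hγ4 : (1 : ℝ) ≤ γ ^ 4 := one_le_pow₀ hγ
    have hsr : ((s + r : ℕ) : ℝ) ≤ 1.01 * s := by
      push_cast
      have : (r : ℝ) ≤ γ ^ 4 * r := by nlinarith
      norm_num
      linarith
    have hw2 : frobNorm W ^ 2 ≤ γ ^ 2 * α ^ 2 := by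
      rw [← mul_pow]; exact pow_le_pow_left₀ hw (hwβ.trans hβα) 2
    have h2 : (t : ℝ) * frobInner U (Astar (sgnVec v) - W) ^ 2
        ≤ (1.01 * s) * (γ ^ 2 * α ^ 2) * frobNorm U ^ 2 := by
      refine h1.trans ?_
      gcongr
    have h3 : γ ^ 2 ≤ γ ^ 12 := pow_le_pow_right₀ hγ (by norm_num)
    have h4 : (1.01 * s) * (γ ^ 2 * α ^ 2) * frobNorm U ^ 2
        ≤ (1.01 * s) * (γ ^ 12 * α ^ 2) * frobNorm U ^ 2 := by gcongr
    have h5 := h2.trans h4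
    rw [ht] at h5
    have hpos : 0 < γ ^ 12 * (s : ℝ) := by positivity
    have h6 : (γ ^ 12 * (s : ℝ)) * (800 * frobInner U (Astar (sgnVec v) - W) ^ 2) ≤
        (γ ^ 12 * (s : ℝ)) * (1.01 * (α ^ 2 * frobNorm U ^ 2)) := by
      norm_num at h5 ⊢
      linarith
    have h7 := le_of_mul_le_mul_left h6 hpos
    have h8 : 0 ≤ α ^ 2 * frobNorm U ^ 2 := by positivity
    rw [div_pow, mul_pow]
    norm_num at h7 ⊢
    linarith
  have hUW : l1norm v - l1norm f - α * frobNorm U / 28 ≤ frobInner U W := by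
    rw [frobInner_sub_right] at hUVW
    linarith
  have hzsq : frobNorm (U - μ • W) ^ 2 =
      frobNorm U ^ 2 - 2 * μ * frobInner U W + μ ^ 2 * frobNorm W ^ 2 := by
    have e : U - μ • W = U + (-μ) • W := by rw [neg_smul, sub_eq_add_neg]
    rw [e, frobNorm_add_sq, frobInner_smul_right, frobNorm_smul_sq]; ring
  by_cases hW0 : W = 0
  · right
    have hμ0 : μ = 0 := by rw [hμ]; simp [hW0]
    have h0 : frobInner U W = 0 := by rw [hW0]; simp [frobInner]
    rw [hμ0, zero_smul, sub_zero]
    have : l1norm f ≤ γ ^ 2 * l1norm f := by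
      have : 1 ≤ γ ^ 2 := one_le_pow₀ hγ
      nlinarith
    rw [h0] at hUW
    linarith
  · have hwpos := frobNorm_pos hW0
    rw [if_pos hW0] at hμ
    set M := max (frobNorm W ^ 2) ((1 / (4 * γ ^ 2)) * l1norm (A W) ^ 2 / frobNorm W ^ 2) with hMdef
    have hM1 : frobNorm W ^ 2 ≤ M := le_max_left _ _
    have hM : 0 < M := lt_of_lt_of_le (by positivity) hM1
    have hM2 : α ^ 2 / (4 * γ ^ 2) ≤ M := by
      refine le_trans ?_ (le_max_right _ _)
      rw [le_div_iff₀ (by positivity)]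
      have : (α * frobNorm W) ^ 2 ≤ l1norm (A W) ^ 2 := pow_le_pow_left₀ (by positivity) hW1 2
      calc α ^ 2 / (4 * γ ^ 2) * frobNorm W ^ 2 = 1 / (4 * γ ^ 2) * (α * frobNorm W) ^ 2 := by ring
        _ ≤ _ := by gcongr
    have hM3 : M ≤ β ^ 2 := by
      refine max_le (pow_le_pow_left₀ hw hwβ 2) ?_
      rw [div_le_iff₀ (by positivity)]
      have : l1norm (A W) ^ 2 ≤ (β * frobNorm W) ^ 2 := pow_le_pow_left₀ (l1_nonneg _) hW2 2
      have h4 : 1 / (4 * γ ^ 2) ≤ 1 := by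
        rw [div_le_one (by positivity)]
        nlinarith
      calc _ ≤ 1 * l1norm (A W) ^ 2 := by gcongr
        _ ≤ _ := by rw [one_mul, ← mul_pow]; exact this
    have hμ0 : 0 ≤ μ := by rw [hμ]; positivity
    have hμM : μ * M = l1norm v := by rw [hμ]; field_simp
    by_cases hc : l1norm f ≤ α * frobNorm U / 20
    · left
      refine scalar_caseA _ _ (l1norm v) M _ α β γ g ha hα hβ hγ hβα hg hM hM3 (frobNorm_nonneg _)
        hc hRl ?_
      rw [hzsq, ← hμ]
      have h1 : μ ^ 2 * frobNorm W ^ 2 ≤ μ * l1norm v := by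
        rw [← hμM]; nlinarith [mul_le_mul_of_nonneg_left hM1 (sq_nonneg μ)]
      nlinarith [mul_le_mul_of_nonneg_left hUW hμ0]
    · right
      push Not at hc
      refine scalar_caseB _ _ (l1norm v) M (frobNorm W) _ α β γ ha hα hE hγ hβα hM hM1 hM2 hwpos
        (by linarith) hRu hR0 ?_
      rw [← hμ]
      refine le_of_sq_le_sq_aux ?_ (by positivity)
      rw [hzsq]
      have hcs : -(frobNorm U * frobNorm W) ≤ frobInner U W := by
        have := frobInner_sq_le U W
        rw [← mul_pow] at this
        exact (abs_le_of_sq_le_sq' this (by positivity)).1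
      nlinarith [mul_le_mul_of_nonneg_left hcs hμ0]

theorem frobNorm_continuous {N₁ N₂ : ℕ} :
    Continuous (fun Z : Matrix (Fin N₁) (Fin N₂) ℝ => frobNorm Z) := by
  unfold frobNorm
  refine Real.continuous_sqrt.comp ?_
  refine continuous_finsetSum _ fun i _ => continuous_finsetSum _ fun j _ => ?_
  exact (continuous_id.matrix_elem i j).pow 2

set_option maxHeartbeats 1000000 in
/-- Theorem 2 (stable and robust recovery): under the modified rank-restricted isometry
property of order t+s+r (s = 100γ⁴r, t = 800γ¹²s) with ratio β/α ≤ γ, the modified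
iterative hard thresholding sequence started at X₀ = 0 applied to y = 𝓐(X) + e satisfies,
for every best rank-r approximation X_r of X,
‖X_r − Xₙ‖_F ≤ ρⁿ‖X_r‖_F + d‖𝓐(X − X_r) + e‖₁ for all n, where
ρ := 1 − (3 − 2√2)/(10γ²), ρ' := 1 + √(8r/(s+r)), d := 960ρ'γ¹⁰/((3 − 2√2)β);
consequently every cluster point X♯ of (Xₙ) satisfies
‖X_r − X♯‖_F ≤ d‖𝓐(X − X_r) + e‖₁. -/
theorem stmt1 {N₁ N₂ m : ℕ} (hN₁ : 0 < N₁) (hN₂ : 0 < N₂) (hm : 0 < m)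
    (r s t : ℕ) (hr : 0 < r) (γ : ℝ) (hγ : 1 ≤ γ)
    (hs : (s : ℝ) = 100 * γ ^ 4 * r) (ht : (t : ℝ) = 800 * γ ^ 12 * s)
    (hdim : t + s + r ≤ min N₁ N₂)
    (A : Matrix (Fin N₁) (Fin N₂) ℝ →ₗ[ℝ] (Fin m → ℝ))
    (Astar : (Fin m → ℝ) →ₗ[ℝ] Matrix (Fin N₁) (Fin N₂) ℝ)
    (hadj : ∀ (u : Fin m → ℝ) (Z : Matrix (Fin N₁) (Fin N₂) ℝ),
      frobInner (Astar u) Z = ∑ i, u i * A Z i)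
    (α β : ℝ) (hα : 0 < α) (hαβ : α ≤ β) (hratio : β / α ≤ γ)
    (hRIP : ∀ Z : Matrix (Fin N₁) (Fin N₂) ℝ, Z.rank ≤ t + s + r →
      α * frobNorm Z ≤ l1norm (A Z) ∧ l1norm (A Z) ≤ β * frobNorm Z)
    (X : Matrix (Fin N₁) (Fin N₂) ℝ) (e : Fin m → ℝ)
    (y : Fin m → ℝ) (hy : y = A X + e)
    (Xseq : ℕ → Matrix (Fin N₁) (Fin N₂) ℝ) (h0 : Xseq 0 = 0)
    (hstep : ∀ n : ℕ, ∃ W : Matrix (Fin N₁) (Fin N₂) ℝ,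
      IsBestRankApprox t (Astar (sgnVec (y - A (Xseq n)))) W ∧
      IsBestRankApprox s
        (Xseq n +
          (if W ≠ 0 then
            l1norm (y - A (Xseq n)) /
              max (frobNorm W ^ 2) ((1 / (4 * γ ^ 2)) * l1norm (A W) ^ 2 / frobNorm W ^ 2)
          else 0) • W)
        (Xseq (n + 1)))
    (Xr : Matrix (Fin N₁) (Fin N₂) ℝ) (hXr : IsBestRankApprox r X Xr) :
    (∀ n : ℕ, frobNorm (Xr - Xseq n) ≤
        (1 - (3 - 2 * Real.sqrt 2) / (10 * γ ^ 2)) ^ n * frobNorm Xr +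
          (960 * (1 + Real.sqrt (8 * (r : ℝ) / ((s : ℝ) + (r : ℝ)))) * γ ^ 10 /
              ((3 - 2 * Real.sqrt 2) * β)) *
            l1norm (A (X - Xr) + e)) ∧
      ∀ Xsharp : Matrix (Fin N₁) (Fin N₂) ℝ, MapClusterPt Xsharp Filter.atTop Xseq →
        frobNorm (Xr - Xsharp) ≤
          (960 * (1 + Real.sqrt (8 * (r : ℝ) / ((s : ℝ) + (r : ℝ)))) * γ ^ 10 /
              ((3 - 2 * Real.sqrt 2) * β)) *
            l1norm (A (X - Xr) + e) := by
  have hγ0 : 0 < γ := by linarith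
  have hβ : 0 < β := lt_of_lt_of_le hα hαβ
  have hβα : β ≤ γ * α := by rwa [div_le_iff₀ hα] at hratio
  have hr0 : (0 : ℝ) < r := by exact_mod_cast hr
  have hγ4 : (1 : ℝ) ≤ γ ^ 4 := one_le_pow₀ hγ
  have hrs : r ≤ s := by
    have : (r : ℝ) ≤ s := by rw [hs]; nlinarith
    exact_mod_cast this
  have hsN : s ≤ N₁ := by omega
  set κ : ℝ := 3 - 2 * Real.sqrt 2 with hκ
  have hsq2 : Real.sqrt 2 ^ 2 = 2 := Real.sq_sqrt (by norm_num)
  have hsq0 := Real.sqrt_nonneg 2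
  have hκ0 : 0 < κ := by
    have : Real.sqrt 2 < 3 / 2 := by nlinarith
    linarith
  have hκ1 : κ ≤ 1 := by
    have : 1 ≤ Real.sqrt 2 := by nlinarith
    linarith
  set E := l1norm (A (X - Xr) + e) with hE
  have hE0 : 0 ≤ E := l1_nonneg _
  set q : ℝ := 1 + Real.sqrt (8 * (r : ℝ) / ((s : ℝ) + (r : ℝ))) with hq
  have hq1 : 1 ≤ q := by
    have := Real.sqrt_nonneg (8 * (r : ℝ) / ((s : ℝ) + (r : ℝ)))
    linarith
  set d : ℝ := 960 * q * γ ^ 10 / (κ * β) with hd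
  set g : ℝ := 1 / γ ^ 2 with hg
  have hgγ : g * γ ^ 2 = 1 := by rw [hg]; field_simp
  have hγ2 : (1 : ℝ) ≤ γ ^ 2 := one_le_pow₀ hγ
  have hg0 : 0 < g := by positivity
  have hg1 : g ≤ 1 := by nlinarith
  have hρ : 1 - κ / (10 * γ ^ 2) = 1 - κ * g / 10 := by rw [hg]; field_simp
  rw [hρ]
  set ρ : ℝ := 1 - κ * g / 10 with hρd
  have hκg : κ * g ≤ g := by nlinarith
  have hκg0 : 0 < κ * g := by positivity
  have hρ0 : 0 ≤ ρ := by linarith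
  have hρ1 : ρ < 1 := by linarith
  have hrank : ∀ n, (Xseq n).rank ≤ s := by
    intro n
    cases n with
    | zero => rw [h0, Matrix.rank_zero]; exact Nat.zero_le _
    | succ n => obtain ⟨W, -, h⟩ := hstep n; exact h.1
  have step : ∀ n, frobNorm (Xr - Xseq (n + 1)) ≤ ρ * frobNorm (Xr - Xseq n) +
      (1 - ρ) * (d * E) := by
    intro n
    obtain ⟨W, hW, hH⟩ := hstep n
    set μ : ℝ := (if W ≠ 0 then
            l1norm (y - A (Xseq n)) /
              max (frobNorm W ^ 2) ((1 / (4 * γ ^ 2)) * l1norm (A W) ^ 2 / frobNorm W ^ 2)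
          else 0) with hμ
    have hv : y - A (Xseq n) = A (Xr - Xseq n) + (A (X - Xr) + e) := by
      rw [hy, map_sub, map_sub]; abel
    have hU : (Xr - Xseq n).rank ≤ s + r := by
      obtain ⟨S, hS, hS'⟩ := (rank_le_iff _ _).1 (hrank n)
      obtain ⟨R, hR, hR'⟩ := (rank_le_iff _ _).1 hXr.1
      refine (rank_le_iff _ _).2 ⟨S ⊔ R, ?_, fun j => ?_⟩
      · have := Submodule.finrank_add_le_finrank_add_finrank S R
        omega
      · rw [colv_sub]
        exact Submodule.sub_mem _ (Submodule.mem_sup_right (hR' j)) (Submodule.mem_sup_left (hS' j))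
    have hz := zstep r s t hr γ hγ hs ht hdim A Astar hadj α β hα hαβ hβα hRIP
      (A (X - Xr) + e) _ (Xr - Xseq n) W hv hU hW μ g hgγ hμ
    have ez : Xr - Xseq n - μ • W = Xr - (Xseq n + μ • W) := by abel
    rw [ez] at hz
    obtain ⟨p, hp1, hp2⟩ := best_threshold hsN hrs hH hXr.1
    have ha := frobNorm_nonneg (Xr - Xseq n)
    have hz0 := frobNorm_nonneg (Xr - (Xseq n + μ • W))
    have hx0 := frobNorm_nonneg (Xr - Xseq (n + 1))
    set x := frobNorm (Xr - Xseq (n + 1))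
    set z := frobNorm (Xr - (Xseq n + μ • W))
    set a := frobNorm (Xr - Xseq n)
    have hp3 : 99 * p ^ 2 ≤ g ^ 2 * z ^ 2 * x ^ 2 := by
      have h1 : 99 * γ ^ 4 * r ≤ (s : ℝ) - r := by rw [hs]; nlinarith
      have h2 : 99 * γ ^ 4 * r * p ^ 2 ≤ r * z ^ 2 * x ^ 2 :=
        (mul_le_mul_of_nonneg_right h1 (sq_nonneg p)).trans hp2
      have h3 : r * (99 * γ ^ 4 * p ^ 2) ≤ r * (z ^ 2 * x ^ 2) := by linarith
      have h4 := le_of_mul_le_mul_left h3 hr0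
      have h5 : g ^ 2 * γ ^ 4 = 1 := by
        calc g ^ 2 * γ ^ 4 = (g * γ ^ 2) ^ 2 := by ring
          _ = 1 := by rw [hgγ]; norm_num
      have h6 := mul_le_mul_of_nonneg_left h4 (sq_nonneg g)
      calc 99 * p ^ 2 = 99 * (g ^ 2 * γ ^ 4) * p ^ 2 := by rw [h5]; ring
        _ = g ^ 2 * (99 * γ ^ 4 * p ^ 2) := by ring
        _ ≤ _ := h6
        _ = _ := by ring
    have hx := scalar_threshold x z p g hx0 hz0 hg0 hg1 hp1 hp3
    have hd1 : (1 - ρ) * (d * E) = 96 * q * γ ^ 8 * E / β := by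
      rw [hρd, hd, hg]; field_simp; ring
    have hd0 : 0 ≤ (1 - ρ) * (d * E) := by rw [hd1]; positivity
    rcases hz with hz | hz
    · have h1 : x ≤ (1 + 0.11 * g) * ((1 - 0.365 * g) * a) := by
        refine hx.trans ?_
        gcongr
      have h2 : (1 + 0.11 * g) * ((1 - 0.365 * g) * a) ≤ ρ * a := by
        rw [← mul_assoc]
        refine mul_le_mul_of_nonneg_right ?_ ha
        norm_num
        nlinarith
      linarith
    · have h1 : x ≤ 1.11 * z := by
        refine hx.trans ?_
        refine mul_le_mul_of_nonneg_right ?_ hz0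
        norm_num
        linarith
      have h2 : x ≤ (1 - ρ) * (d * E) := by
        rw [hd1, le_div_iff₀ hβ]
        have h3 : x * β ≤ x * (γ * α) := by gcongr
        have h4 : x * (γ * α) ≤ 1.11 * z * (γ * α) := by gcongr
        have h5 : 1.11 * z * (γ * α) = 1.11 * γ * (α * z) := by ring
        have h6 : 1.11 * γ * (α * z) ≤ 1.11 * γ * (62 * γ ^ 2 * E) := by gcongr
        have h7 : γ ^ 3 ≤ γ ^ 8 := pow_le_pow_right₀ hγ (by norm_num)
        have h8 : 1.11 * γ * (62 * γ ^ 2 * E) ≤ 96 * γ ^ 3 * E := by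
          have : 0 ≤ γ ^ 3 * E := by positivity
          norm_num
          nlinarith
        have h9 : 96 * γ ^ 3 * E ≤ 96 * γ ^ 8 * E := by gcongr
        have h10 : 96 * γ ^ 8 * E ≤ 96 * q * γ ^ 8 * E := by
          have : 0 ≤ γ ^ 8 * E := by positivity
          nlinarith
        linarith
      have : 0 ≤ ρ * a := by positivity
      linarith
  have hdE : 0 ≤ d * E := by positivity
  have main : ∀ n : ℕ, frobNorm (Xr - Xseq n) ≤ ρ ^ n * frobNorm Xr + d * E := by
    intro n
    induction n with
    | zero => rw [h0, sub_zero, pow_zero, one_mul]; linarith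
    | succ n ih =>
      have h1 := step n
      have h2 := mul_le_mul_of_nonneg_left ih hρ0
      rw [pow_succ]
      linarith
  refine ⟨main, ?_⟩
  intro Xs hXs
  refine le_of_forall_pos_le_add fun ε hε => ?_
  by_contra! hc
  have hcont : Continuous (fun Z : Matrix (Fin N₁) (Fin N₂) ℝ => frobNorm (Xr - Z)) :=
    frobNorm_continuous.comp (continuous_const.sub continuous_id)
  have hopen : {Z : Matrix (Fin N₁) (Fin N₂) ℝ | d * E + ε < frobNorm (Xr - Z)} ∈ nhds Xs :=
    (isOpen_lt continuous_const hcont).mem_nhds hc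
  have hfreq := mapClusterPt_iff_frequently.1 hXs _ hopen
  have hlim : Filter.Tendsto (fun n : ℕ => ρ ^ n * frobNorm Xr) Filter.atTop (nhds 0) := by
    simpa using (tendsto_pow_atTop_nhds_zero_of_lt_one hρ0 hρ1).mul_const (frobNorm Xr)
  have hev := hlim.eventually (gt_mem_nhds hε)
  obtain ⟨n, hn1, hn2⟩ := (hfreq.and_eventually hev).exists
  have h1 := main n
  have h2 : d * E + ε < frobNorm (Xr - Xseq n) := hn1
  linarith
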